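/- Let $1 < p < \infty$, $\mathcal{S}$ a sparse family of dyadic cubes contained in a cube $R$, and $w$ a weight with $\sigma = w^{1-p'}$. Then $\sum_{Q \in \mathcal{S}} (\fint_Q w)^{p'}\sigma(Q) \lesssim [w]_{(A_p)^{1/p}(A_\infty^{\exp})^{1/p'}}^{p'} \, w(R)$, where the implicit constant depends only on $p$ and dimension. -/

import Mathlib

open MeasureTheory Set
open scoped ENNReal

noncomputable section

/-- A (closed, axis-parallel, nondegenerate) cube in `ℝⁿ`. -/
def IsCube {n : ℕ} (Q : Set (Fin n → ℝ)) : Prop :=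
  ∃ (a : Fin n → ℝ) (l : ℝ), 0 < l ∧ Q = Set.Icc a (a + fun _ => l)

/-- The average `⨍_Q f` of `f` over `Q` (w.r.t. Lebesgue measure). -/
def avg {n : ℕ} (Q : Set (Fin n → ℝ)) (f : (Fin n → ℝ) → ℝ) : ℝ :=
  (volume Q).toReal⁻¹ * ∫ x in Q, f x

/-- The `A_p` quantity `A_p(w,Q) = (⨍_Q w) (⨍_Q w^{-1/(p-1)})^{p-1}`. -/
def ApQ {n : ℕ} (p : ℝ) (w : (Fin n → ℝ) → ℝ) (Q : Set (Fin n → ℝ)) : ℝ :=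
  avg Q w * (avg Q fun x => w x ^ (-(1 / (p - 1)))) ^ (p - 1)

/-- The exponential `A_∞` quantity `A_∞^exp(w,Q) = (⨍_Q w) exp(-⨍_Q log w)`. -/
def AexpQ {n : ℕ} (w : (Fin n → ℝ) → ℝ) (Q : Set (Fin n → ℝ)) : ℝ :=
  avg Q w * Real.exp (-(avg Q fun x => Real.log (w x)))

/-- A dyadic cube of generation `k` (half-open, side length `2^k`). -/
def IsDyadicCubeOf {n : ℕ} (k : ℤ) (Q : Set (Fin n → ℝ)) : Prop :=
  ∃ a : Fin n → ℝ, Q = Set.univ.pi fun i => Set.Ico (a i) (a i + (2 : ℝ) ^ k)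

/-- A dyadic grid: a collection of cubes of side lengths `2^k`, pairwise nested or
disjoint, partitioning `ℝⁿ` at each scale. -/
def IsDyadicGrid {n : ℕ} (𝒟 : Set (Set (Fin n → ℝ))) : Prop :=
  (∀ Q ∈ 𝒟, ∃ k : ℤ, IsDyadicCubeOf k Q) ∧
  (∀ Q ∈ 𝒟, ∀ P ∈ 𝒟, Q ⊆ P ∨ P ⊆ Q ∨ Disjoint Q P) ∧
  (∀ k : ℤ, ⋃₀ {Q | Q ∈ 𝒟 ∧ IsDyadicCubeOf k Q} = Set.univ ∧
    Set.PairwiseDisjoint {Q | Q ∈ 𝒟 ∧ IsDyadicCubeOf k Q} id)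

/-- The union of the strict subcubes of `Q` belonging to the family `𝒮`. -/
def strictUnion {n : ℕ} (𝒮 : Set (Set (Fin n → ℝ))) (Q : Set (Fin n → ℝ)) :
    Set (Fin n → ℝ) :=
  ⋃ Q' ∈ {Q' | Q' ∈ 𝒮 ∧ Q' ⊂ Q}, Q'

/-- The "major subset" `E_Q = Q \ ⋃ {Q' ∈ 𝒮 : Q' ⊊ Q}`. -/
def Eset {n : ℕ} (𝒮 : Set (Set (Fin n → ℝ))) (Q : Set (Fin n → ℝ)) :
    Set (Fin n → ℝ) :=
  Q \ strictUnion 𝒮 Q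

/-- A sparse family: for each `Q ∈ 𝒮`, `|⋃ {Q' ∈ 𝒮 : Q' ⊊ Q}| ≤ |Q|/2`. -/
def IsSparse {n : ℕ} (𝒮 : Set (Set (Fin n → ℝ))) : Prop :=
  ∀ Q ∈ 𝒮, volume (strictUnion 𝒮 Q) ≤ volume Q / 2

/-!
Unwinding the definitions gives
`(⨍_Q w)^{p'} σ(Q) = (A_p(w,Q)^{1/p} A_∞^exp(w,Q)^{1/p'})^{p'} exp(⨍_Q log w) |Q|`,
and the first factor is at most the mixed characteristic to the power `p'`. Sparseness gives
`|Q| ≤ 2 |E_Q|`, where the major subsets `E_Q` are disjoint, and Jensen's inequality gives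
`exp(⨍_Q log w) ≤ (⨍_Q √w)²`. So, with `M` the maximal function over the cubes of the family,
`∑ exp(⨍_Q log w) |Q| ≤ 2 ∫ (M √w)² ≤ 8 ∫ w`, where the last step is the `L²` maximal inequality
for laminar families, with constant `2² = 4`.
-/

section Laminar

variable {X : Type*}

/-- A laminar family of sets: any two members are nested or disjoint, as in a dyadic grid. -/
def IsLaminar (𝒬 : Set (Set X)) : Prop :=
  ∀ Q ∈ 𝒬, ∀ P ∈ 𝒬, Q ⊆ P ∨ P ⊆ Q ∨ Disjoint Q P

lemma IsLaminar.mono {𝒮 𝒬 : Set (Set X)} (h𝒬 : IsLaminar 𝒬) (h : 𝒮 ⊆ 𝒬) : IsLaminar 𝒮 :=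
  fun Q hQ P hP => h𝒬 Q (h hQ) P (h hP)

lemma IsLaminar.exists_pairwiseDisjoint_biUnion_eq {F : Finset (Set X)}
    (hF : IsLaminar (F : Set (Set X))) :
    ∃ G ⊆ F, (G : Set (Set X)).PairwiseDisjoint id ∧ ⋃ Q ∈ G, Q = ⋃ Q ∈ F, Q := by
  classical
  refine ⟨F.filter (Maximal (· ∈ F)), Finset.filter_subset _ _, fun Q hQ P hP hne => ?_,
    Subset.antisymm (biUnion_subset_biUnion_left (Finset.filter_subset _ _)) ?_⟩
  · obtain ⟨hQF, hQmax⟩ := Finset.mem_filter.1 hQ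
    obtain ⟨hPF, hPmax⟩ := Finset.mem_filter.1 hP
    rcases hF Q hQF P hPF with h | h | h
    · exact absurd (hQmax.eq_of_le hPF h) hne
    · exact absurd (hPmax.eq_of_le hQF h) hne.symm
    · exact h
  · refine iUnion₂_subset fun Q hQ => ?_
    obtain ⟨P, hQP, hP⟩ := F.exists_le_maximal hQ
    exact hQP.trans (subset_biUnion_of_mem (u := id) (Finset.mem_filter.2 ⟨hP.prop, hP⟩))

lemma IsLaminar.mul_measure_biUnion_le [MeasurableSpace X] {μ ν : Measure X}
    {F : Finset (Set X)} (hF : IsLaminar (F : Set (Set X))) (hmeas : ∀ Q ∈ F, MeasurableSet Q)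
    {t : ℝ≥0∞} (ht : ∀ Q ∈ F, t * μ Q ≤ ν Q) :
    t * μ (⋃ Q ∈ F, Q) ≤ ν (⋃ Q ∈ F, Q) := by
  obtain ⟨G, hGF, hGdisj, hG⟩ := hF.exists_pairwiseDisjoint_biUnion_eq
  have hadd (ρ : Measure X) : ρ (⋃ Q ∈ G, Q) = ∑ Q ∈ G, ρ Q :=
    measure_biUnion_finset hGdisj fun Q hQ => hmeas Q (hGF hQ)
  rw [← hG, hadd μ, hadd ν, Finset.mul_sum]
  exact Finset.sum_le_sum fun Q hQ => ht Q (hGF hQ)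

end Laminar

section WeakToStrong

variable {X : Type*} [MeasurableSpace X] {μ : Measure X}

lemma lintegral_rpow_le_of_mul_meas_lt_le {p : ℝ} (hp : 1 < p) {f g : X → ℝ≥0∞}
    (hf : AEMeasurable f μ) (hg : Measurable g) (hg_top : ∀ x, g x ≠ ∞)
    (hweak : ∀ t, t * μ {x | t < g x} ≤ ∫⁻ x in {x | t < g x}, f x ∂μ) :
    ∫⁻ x, g x ^ p ∂μ ≤ ENNReal.ofReal (p / (p - 1)) * ∫⁻ x, f x * g x ^ (p - 1) ∂μ := by
  have hp0 : 0 < p := one_pos.trans hp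
  have hp1 : 0 < p - 1 := sub_pos.2 hp
  have layer_cake (ν : Measure X) {r : ℝ} (hr : 0 < r) : ∫⁻ x, g x ^ r ∂ν =
      ENNReal.ofReal r * ∫⁻ t in Ioi (0 : ℝ),
        ν {x | ENNReal.ofReal t < g x} * ENNReal.ofReal (t ^ (r - 1)) := by
    have h := lintegral_rpow_eq_lintegral_meas_lt_mul ν (f := fun x => (g x).toReal)
      (ae_of_all _ fun x => ENNReal.toReal_nonneg) hg.ennreal_toReal.aemeasurable hr
    simp only [← ENNReal.ofReal_rpow_of_nonneg ENNReal.toReal_nonneg hr.le,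
      ENNReal.ofReal_toReal (hg_top _)] at h
    rw [h]
    congr 1
    refine setLIntegral_congr_fun measurableSet_Ioi fun t ht => ?_
    simp only [ENNReal.ofReal_lt_iff_lt_toReal (le_of_lt ht) (hg_top _)]
  have hlevel {t : ℝ} (ht : 0 < t) :
      μ {x | ENNReal.ofReal t < g x} * ENNReal.ofReal (t ^ (p - 1)) ≤
        μ.withDensity f {x | ENNReal.ofReal t < g x} * ENNReal.ofReal (t ^ (p - 1 - 1)) := by
    rw [withDensity_apply _ (measurableSet_lt measurable_const hg),
      show t ^ (p - 1) = t * t ^ (p - 1 - 1) by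
        rw [Real.rpow_sub_one ht.ne' (p - 1), mul_div_cancel₀ _ ht.ne'],
      ENNReal.ofReal_mul ht.le, ← mul_assoc, mul_comm (μ _)]
    gcongr
    exact hweak _
  calc ∫⁻ x, g x ^ p ∂μ
      ≤ ENNReal.ofReal p * ∫⁻ t in Ioi (0 : ℝ),
          μ.withDensity f {x | ENNReal.ofReal t < g x} * ENNReal.ofReal (t ^ (p - 1 - 1)) := by
        rw [layer_cake μ hp0]
        gcongr ENNReal.ofReal p * ?_
        exact setLIntegral_mono' measurableSet_Ioi fun t ht => hlevel ht
    _ = ENNReal.ofReal (p / (p - 1)) * ∫⁻ x, g x ^ (p - 1) ∂μ.withDensity f := by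
        rw [layer_cake _ hp1, ← mul_assoc, ← ENNReal.ofReal_mul (by positivity),
          div_mul_cancel₀ _ hp1.ne']
    _ = ENNReal.ofReal (p / (p - 1)) * ∫⁻ x, f x * g x ^ (p - 1) ∂μ := by
        rw [lintegral_withDensity_eq_lintegral_mul₀ hf (hg.pow_const _).aemeasurable]
        rfl

/-- Doob's argument: by Hölder's inequality `∫ g ^ p ≤ c ‖f‖_p (∫ g ^ p) ^ (1 / p')`, and the last
factor is absorbed into the left-hand side. -/
lemma lintegral_rpow_le_rpow_mul_of_mul_meas_lt_le {p : ℝ} (hp : 1 < p) {f g : X → ℝ≥0∞}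
    (hf : AEMeasurable f μ) (hg : Measurable g) (hg_top : ∀ x, g x ≠ ∞)
    (hg_int : ∫⁻ x, g x ^ p ∂μ ≠ ∞)
    (hweak : ∀ t, t * μ {x | t < g x} ≤ ∫⁻ x in {x | t < g x}, f x ∂μ) :
    ∫⁻ x, g x ^ p ∂μ ≤ ENNReal.ofReal (p / (p - 1)) ^ p * ∫⁻ x, f x ^ p ∂μ := by
  have hp0 : 0 < p := one_pos.trans hp
  have hpq : p.HolderConjugate (p / (p - 1)) := Real.HolderConjugate.conjExponent hp
  set I := ∫⁻ x, g x ^ p ∂μ with hI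
  set c := ENNReal.ofReal (p / (p - 1))
  rcases eq_or_ne I 0 with hI0 | hI0
  · simp only [hI0, zero_le]
  have hholder : I ≤ c * (∫⁻ x, f x ^ p ∂μ) ^ (1 / p) * I ^ (1 / (p / (p - 1))) := by
    have h := ENNReal.lintegral_mul_le_Lp_mul_Lq μ hpq hf (hg.pow_const (p - 1)).aemeasurable
    simp only [← ENNReal.rpow_mul, hpq.sub_one_mul_conj, ← hI] at h
    rw [mul_assoc]
    exact (lintegral_rpow_le_of_mul_meas_lt_le hp hf hg hg_top hweak).trans
      (mul_le_mul_right h c)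
  have hsplit : I = I ^ (1 / p) * I ^ (1 / (p / (p - 1))) := by
    rw [← ENNReal.rpow_add _ _ hI0 hg_int, hpq.one_div_add_one_div, div_one, ENNReal.rpow_one]
  have hroot : I ^ (1 / p) ≤ c * (∫⁻ x, f x ^ p ∂μ) ^ (1 / p) := by
    have hq : 0 ≤ 1 / (p / (p - 1)) := hpq.symm.one_div_nonneg
    nth_rw 1 [hsplit] at hholder
    exact (ENNReal.mul_le_mul_iff_left (by simp [hI0, hg_int])
      (ENNReal.rpow_ne_top_of_nonneg hq hg_int)).1 hholder
  simpa [ENNReal.mul_rpow_of_nonneg _ _ hp0.le, ← ENNReal.rpow_mul, hp0.ne'] using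
    ENNReal.rpow_le_rpow hroot hp0.le

end WeakToStrong

section MaximalFunction

variable {X : Type*} [MeasurableSpace X]

/-- The maximal function `x ↦ sup {⨍_Q f : x ∈ Q ∈ 𝒬}` associated with a family `𝒬` of sets; the
supremum over no set at all is `0`. -/
def maximalAverage (μ : Measure X) (𝒬 : Set (Set X)) (f : X → ℝ≥0∞) (x : X) : ℝ≥0∞ :=
  ⨆ Q ∈ 𝒬, Q.indicator (fun _ => ⨍⁻ y in Q, f y ∂μ) x

variable {μ : Measure X} {F : Finset (Set X)} {f : X → ℝ≥0∞}

lemma laverage_le_maximalAverage {𝒬 : Set (Set X)} {Q : Set X} (hQ : Q ∈ 𝒬) {x : X} (hx : x ∈ Q) :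
    ⨍⁻ y in Q, f y ∂μ ≤ maximalAverage μ 𝒬 f x :=
  le_iSup₂_of_le Q hQ (indicator_of_mem hx fun _ => ⨍⁻ y in Q, f y ∂μ).ge

lemma setOf_lt_maximalAverage (𝒬 : Set (Set X)) (t : ℝ≥0∞) :
    {x | t < maximalAverage μ 𝒬 f x} = ⋃ Q ∈ {Q ∈ 𝒬 | t < ⨍⁻ y in Q, f y ∂μ}, Q := by
  ext x
  have hindicator (Q : Set X) :
      t < Q.indicator (fun _ => ⨍⁻ y in Q, f y ∂μ) x ↔ t < ⨍⁻ y in Q, f y ∂μ ∧ x ∈ Q := by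
    by_cases hx : x ∈ Q <;> simp [hx]
  simp only [maximalAverage, mem_ofPred_eq, lt_iSup_iff, hindicator, mem_iUnion, exists_prop,
    and_assoc]

lemma measurable_maximalAverage (hmeas : ∀ Q ∈ F, MeasurableSet Q) :
    Measurable (maximalAverage μ F f) :=
  .biSup _ F.countable_toSet fun Q hQ => measurable_const.indicator (hmeas Q hQ)

lemma maximalAverage_le_indicator_sum (F : Finset (Set X)) (f : X → ℝ≥0∞) :
    maximalAverage μ F f ≤ (⋃ Q ∈ F, Q).indicator fun _ => ∑ Q ∈ F, ⨍⁻ y in Q, f y ∂μ := by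
  refine fun x => iSup₂_le fun Q hQ => indicator_le (fun y hy => ?_) x
  rw [indicator_of_mem (mem_iUnion₂.2 ⟨Q, Finset.mem_coe.1 hQ, hy⟩)]
  exact Finset.single_le_sum (f := fun Q => ⨍⁻ y in Q, f y ∂μ) (fun _ _ => zero_le) hQ

lemma mul_measure_lt_maximalAverage_le (hF : IsLaminar (F : Set (Set X)))
    (hmeas : ∀ Q ∈ F, MeasurableSet Q) (t : ℝ≥0∞) :
    t * μ {x | t < maximalAverage μ F f x} ≤
      ∫⁻ x in {x | t < maximalAverage μ F f x}, f x ∂μ := by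
  classical
  set G := F.filter (t < ⨍⁻ y in ·, f y ∂μ) with hG
  have hGF : G ⊆ F := Finset.filter_subset _ _
  have hlevel : {x | t < maximalAverage μ F f x} = ⋃ Q ∈ G, Q := by
    simp only [setOf_lt_maximalAverage, hG, Finset.mem_filter, Finset.mem_coe, mem_ofPred_eq]
  have haverage : ∀ Q ∈ G, t * μ Q ≤ μ.withDensity f Q := fun Q hQ => by
    rw [withDensity_apply _ (hmeas Q (hGF hQ))]
    have h := (Finset.mem_filter.1 hQ).2.le
    rw [setLAverage_eq] at h
    exact ENNReal.mul_le_of_le_div h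
  rw [hlevel, ← withDensity_apply _ (G.measurableSet_biUnion fun Q hQ => hmeas Q (hGF hQ))]
  exact (hF.mono (Finset.coe_subset.2 hGF)).mul_measure_biUnion_le
    (fun Q hQ => hmeas Q (hGF hQ)) haverage

lemma maximalAverage_ne_top (hf_int : ∀ Q ∈ F, ∫⁻ x in Q, f x ∂μ ≠ ∞) (x : X) :
    maximalAverage μ F f x ≠ ∞ :=
  ne_top_of_le_ne_top
    (ENNReal.sum_ne_top.2 fun Q hQ => (setLAverage_lt_top (hf_int Q hQ)).ne)
    ((maximalAverage_le_indicator_sum F f x).trans (indicator_le_self _ _ x))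

lemma lintegral_maximalAverage_rpow_ne_top {p : ℝ} (hp : 0 < p)
    (hmeas : ∀ Q ∈ F, MeasurableSet Q) (hμ : ∀ Q ∈ F, μ Q ≠ ∞)
    (hf_int : ∀ Q ∈ F, ∫⁻ x in Q, f x ∂μ ≠ ∞) :
    ∫⁻ x, maximalAverage μ F f x ^ p ∂μ ≠ ∞ := by
  set K := ∑ Q ∈ F, ⨍⁻ y in Q, f y ∂μ with hK_def
  have hK : K ≠ ∞ := ENNReal.sum_ne_top.2 fun Q hQ => (setLAverage_lt_top (hf_int Q hQ)).ne
  have hpow : ∀ x, maximalAverage μ F f x ^ p ≤ (⋃ Q ∈ F, Q).indicator (fun _ => K ^ p) x := by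
    intro x
    refine (ENNReal.rpow_le_rpow (maximalAverage_le_indicator_sum F f x) hp.le).trans_eq ?_
    by_cases hx : x ∈ ⋃ Q ∈ F, Q
    · simp only [indicator_of_mem hx, hK_def]
    · simp only [indicator_of_notMem hx, ENNReal.zero_rpow_of_pos hp]
  refine ne_top_of_le_ne_top ?_ (lintegral_mono hpow)
  rw [lintegral_indicator_const (F.measurableSet_biUnion hmeas)]
  exact ENNReal.mul_ne_top (ENNReal.rpow_ne_top_of_nonneg hp.le hK)
    (measure_biUnion_lt_top F.finite_toSet fun Q hQ => (hμ Q hQ).lt_top).ne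

lemma lintegral_maximalAverage_rpow_le {p : ℝ} (hp : 1 < p) (hF : IsLaminar (F : Set (Set X)))
    (hmeas : ∀ Q ∈ F, MeasurableSet Q) (hμ : ∀ Q ∈ F, μ Q ≠ ∞) (hf : AEMeasurable f μ)
    (hf_int : ∀ Q ∈ F, ∫⁻ x in Q, f x ∂μ ≠ ∞) :
    ∫⁻ x, maximalAverage μ F f x ^ p ∂μ ≤
      ENNReal.ofReal (p / (p - 1)) ^ p * ∫⁻ x, f x ^ p ∂μ :=
  lintegral_rpow_le_rpow_mul_of_mul_meas_lt_le hp hf (measurable_maximalAverage hmeas)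
    (maximalAverage_ne_top hf_int)
    (lintegral_maximalAverage_rpow_ne_top (one_pos.trans hp) hmeas hμ hf_int)
    (mul_measure_lt_maximalAverage_le hF hmeas)

lemma sum_laverage_rpow_mul_measure_le {p : ℝ} (hp : 1 < p) (hF : IsLaminar (F : Set (Set X)))
    (hmeas : ∀ Q ∈ F, MeasurableSet Q) (hμ : ∀ Q ∈ F, μ Q ≠ ∞) (hf : AEMeasurable f μ)
    (hf_int : ∀ Q ∈ F, ∫⁻ x in Q, f x ∂μ ≠ ∞) {E : Set X → Set X} (hE : ∀ Q ∈ F, E Q ⊆ Q)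
    (hE_meas : ∀ Q ∈ F, MeasurableSet (E Q)) (hE_disj : (F : Set (Set X)).PairwiseDisjoint E) :
    ∑ Q ∈ F, (⨍⁻ x in Q, f x ∂μ) ^ p * μ (E Q) ≤
      ENNReal.ofReal (p / (p - 1)) ^ p * ∫⁻ x, f x ^ p ∂μ := by
  calc ∑ Q ∈ F, (⨍⁻ x in Q, f x ∂μ) ^ p * μ (E Q)
      ≤ ∑ Q ∈ F, ∫⁻ x in E Q, maximalAverage μ F f x ^ p ∂μ := by
        refine Finset.sum_le_sum fun Q hQ => ?_
        rw [← setLIntegral_const]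
        exact setLIntegral_mono' (hE_meas Q hQ) fun x hx => ENNReal.rpow_le_rpow
          (laverage_le_maximalAverage hQ (hE Q hQ hx)) (one_pos.trans hp).le
    _ = ∫⁻ x in ⋃ Q ∈ F, E Q, maximalAverage μ F f x ^ p ∂μ :=
        (lintegral_biUnion_finset hE_disj hE_meas _).symm
    _ ≤ ∫⁻ x, maximalAverage μ F f x ^ p ∂μ := setLIntegral_le_lintegral _ _
    _ ≤ _ := lintegral_maximalAverage_rpow_le hp hF hmeas hμ hf hf_int

end MaximalFunction

section GeometricMean

variable {X : Type*} [MeasurableSpace X] {μ : Measure X} {w : X → ℝ}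

lemma exp_average_log_le_average [IsFiniteMeasure μ] [NeZero μ] (hw_pos : ∀ x, 0 < w x)
    (hw : Integrable w μ) (hlog : Integrable (fun x => Real.log (w x)) μ) :
    Real.exp (⨍ x, Real.log (w x) ∂μ) ≤ ⨍ x, w x ∂μ := by
  have hexp_log : Real.exp ∘ (fun x => Real.log (w x)) = w :=
    funext fun x => Real.exp_log (hw_pos x)
  have h := convexOn_exp.map_average_le Real.continuous_exp.continuousOn isClosed_univ
    (ae_of_all μ fun _ => mem_univ _) hlog (by rwa [hexp_log])
  exact h.trans_eq (congrArg (average μ) hexp_log)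

lemma integrable_sqrt [IsFiniteMeasure μ] (hw : Integrable w μ) :
    Integrable (fun x => √(w x)) μ := by
  refine ((integrable_const 1).add hw.abs).mono'
    (Real.continuous_sqrt.comp_aestronglyMeasurable hw.1) (ae_of_all _ fun x => ?_)
  rw [Real.norm_of_nonneg (Real.sqrt_nonneg _), Pi.add_apply, Real.sqrt_le_left (by positivity)]
  nlinarith [le_abs_self (w x), abs_nonneg (w x)]

lemma integrable_log_of_rpow_neg {r : ℝ} (hr : 0 < r) (hw_pos : ∀ x, 0 < w x)
    (hw : Integrable w μ) (hw_neg : Integrable (fun x => w x ^ (-r)) μ) :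
    Integrable (fun x => Real.log (w x)) μ := by
  refine (hw.add (hw_neg.div_const r)).mono'
    (Real.measurable_log.comp_aemeasurable hw.1.aemeasurable).aestronglyMeasurable
    (ae_of_all _ fun x => abs_le.2 ⟨?_, ?_⟩)
  · have h := Real.log_le_rpow_div (inv_nonneg.2 (hw_pos x).le) hr
    rw [Real.log_inv, Real.inv_rpow (hw_pos x).le, ← Real.rpow_neg (hw_pos x).le] at h
    simp only [Pi.add_apply]
    linarith [hw_pos x]
  · have h : 0 ≤ w x ^ (-r) / r := div_nonneg (Real.rpow_nonneg (hw_pos x).le _) hr.le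
    simp only [Pi.add_apply]
    linarith [Real.log_le_self (hw_pos x).le]

lemma ofReal_exp_average_log_le_laverage_sqrt_sq [IsFiniteMeasure μ] [NeZero μ]
    (hw_pos : ∀ x, 0 < w x) (hw : Integrable w μ)
    (hlog : Integrable (fun x => Real.log (w x)) μ) :
    ENNReal.ofReal (Real.exp (⨍ x, Real.log (w x) ∂μ)) ≤
      (⨍⁻ x, ENNReal.ofReal (√(w x)) ∂μ) ^ (2 : ℝ) := by
  have hlog_sqrt : ∀ x, Real.log (√(w x)) = Real.log (w x) / 2 :=
    fun x => Real.log_sqrt (hw_pos x).le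
  have hjensen : Real.exp (⨍ x, Real.log (√(w x)) ∂μ) ≤ ⨍ x, √(w x) ∂μ :=
    exp_average_log_le_average (fun x => Real.sqrt_pos.2 (hw_pos x)) (integrable_sqrt hw)
      (by simpa only [hlog_sqrt] using hlog.div_const 2)
  have hsquare : Real.exp (⨍ x, Real.log (w x) ∂μ) =
      Real.exp (⨍ x, Real.log (√(w x)) ∂μ) ^ (2 : ℝ) := by
    simp only [hlog_sqrt, average_eq, integral_div, smul_eq_mul, ← Real.exp_mul]
    congr 1
    ring
  rw [hsquare, ← ENNReal.ofReal_rpow_of_pos (Real.exp_pos _), laverage_eq,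
    ← ofReal_average (integrable_sqrt hw) (ae_of_all _ fun x => Real.sqrt_nonneg _)]
  gcongr

/-- The constant `4 = 2²` is that of the maximal inequality for `√w` in `L²`. -/
lemma sum_exp_average_log_mul_measure_le {F : Finset (Set X)} (hF : IsLaminar (F : Set (Set X)))
    (hmeas : ∀ Q ∈ F, MeasurableSet Q) (hμ : ∀ Q ∈ F, μ Q ≠ ∞) (hμ₀ : ∀ Q ∈ F, μ Q ≠ 0)
    (hw_pos : ∀ x, 0 < w x) (hw_meas : AEMeasurable w μ) (hw : ∀ Q ∈ F, IntegrableOn w Q μ)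
    (hlog : ∀ Q ∈ F, IntegrableOn (fun x => Real.log (w x)) Q μ)
    {E : Set X → Set X} (hE : ∀ Q ∈ F, E Q ⊆ Q) (hE_meas : ∀ Q ∈ F, MeasurableSet (E Q))
    (hE_disj : (F : Set (Set X)).PairwiseDisjoint E) :
    ∑ Q ∈ F, ENNReal.ofReal (Real.exp (⨍ x in Q, Real.log (w x) ∂μ)) * μ (E Q) ≤
      4 * ∫⁻ x, ENNReal.ofReal (w x) ∂μ := by
  have hfin : ∀ Q ∈ F, IsFiniteMeasure (μ.restrict Q) := fun Q hQ =>
    isFiniteMeasure_restrict.2 (hμ Q hQ)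
  have hsq : ∀ x, ENNReal.ofReal (√(w x)) ^ (2 : ℝ) = ENNReal.ofReal (w x) := fun x => by
    rw [ENNReal.ofReal_rpow_of_nonneg (Real.sqrt_nonneg _) two_pos.le, Real.rpow_two,
      Real.sq_sqrt (hw_pos x).le]
  have hsqrt_int : ∀ Q ∈ F, ∫⁻ x in Q, ENNReal.ofReal (√(w x)) ∂μ ≠ ∞ := fun Q hQ =>
    have := hfin Q hQ
    (integrable_sqrt (hw Q hQ)).lintegral_lt_top.ne
  calc ∑ Q ∈ F, ENNReal.ofReal (Real.exp (⨍ x in Q, Real.log (w x) ∂μ)) * μ (E Q)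
      ≤ ∑ Q ∈ F, (⨍⁻ x in Q, ENNReal.ofReal (√(w x)) ∂μ) ^ (2 : ℝ) * μ (E Q) := by
        refine Finset.sum_le_sum fun Q hQ => ?_
        have := hfin Q hQ
        have : NeZero (μ.restrict Q) := ⟨Measure.restrict_eq_zero.not.2 (hμ₀ Q hQ)⟩
        gcongr
        exact ofReal_exp_average_log_le_laverage_sqrt_sq hw_pos (hw Q hQ) (hlog Q hQ)
    _ ≤ ENNReal.ofReal (2 / (2 - 1)) ^ (2 : ℝ) *
          ∫⁻ x, ENNReal.ofReal (√(w x)) ^ (2 : ℝ) ∂μ :=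
        sum_laverage_rpow_mul_measure_le one_lt_two hF hmeas hμ
          hw_meas.sqrt.ennreal_ofReal hsqrt_int hE hE_meas hE_disj
    _ = 4 * ∫⁻ x, ENNReal.ofReal (w x) ∂μ := by
        simp only [hsq]
        norm_num

end GeometricMean

section Sparse

variable {n : ℕ} {𝒮 : Set (Set (Fin n → ℝ))}

lemma IsSparse.mono {𝒯 : Set (Set (Fin n → ℝ))} (h𝒮 : IsSparse 𝒮) (h : 𝒯 ⊆ 𝒮) : IsSparse 𝒯 :=
  fun Q hQ => (measure_mono (biUnion_subset_biUnion_left fun _ (hP : _ ∈ 𝒯 ∧ _ ⊂ Q) =>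
    And.intro (h hP.1) hP.2)).trans (h𝒮 Q (h hQ))

lemma IsSparse.volume_le_two_mul_volume_Eset (h𝒮 : IsSparse 𝒮) {Q : Set (Fin n → ℝ)} (hQ : Q ∈ 𝒮)
    (hvol : volume Q ≠ ∞) : volume Q ≤ 2 * volume (Eset 𝒮 Q) := by
  have hcover : volume Q / 2 + volume Q / 2 ≤ volume (Eset 𝒮 Q) + volume Q / 2 := by
    rw [ENNReal.add_halves]
    calc volume Q ≤ volume (Eset 𝒮 Q ∪ strictUnion 𝒮 Q) :=
          measure_mono (subset_sdiff_union Q _)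
      _ ≤ volume (Eset 𝒮 Q) + volume (strictUnion 𝒮 Q) := measure_union_le _ _
      _ ≤ volume (Eset 𝒮 Q) + volume Q / 2 := by gcongr; exact h𝒮 Q hQ
  have hhalf := ENNReal.le_of_add_le_add_right (ENNReal.div_ne_top hvol two_ne_zero) hcover
  rwa [ENNReal.div_le_iff two_ne_zero ENNReal.ofNat_ne_top, mul_comm] at hhalf

lemma measurableSet_Eset {F : Finset (Set (Fin n → ℝ))} (hmeas : ∀ Q ∈ F, MeasurableSet Q)
    {Q : Set (Fin n → ℝ)} (hQ : Q ∈ F) : MeasurableSet (Eset F Q) :=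
  (hmeas Q hQ).diff <| (F.finite_toSet.subset fun _ hP => hP.1).measurableSet_biUnion
    fun P hP => hmeas P hP.1

lemma IsLaminar.pairwiseDisjoint_Eset (h𝒮 : IsLaminar 𝒮) : 𝒮.PairwiseDisjoint (Eset 𝒮) := by
  have hnested {Q P : Set (Fin n → ℝ)} (hQ : Q ∈ 𝒮) (hQP : Q ⊂ P) :
      Disjoint (Eset 𝒮 Q) (Eset 𝒮 P) :=
    disjoint_left.2 fun x hxQ hxP => hxP.2 (mem_iUnion₂.2 ⟨Q, ⟨hQ, hQP⟩, hxQ.1⟩)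
  intro Q hQ P hP hne
  rcases h𝒮 Q hQ P hP with h | h | h
  · exact hnested hQ (h.ssubset_of_ne hne)
  · exact (hnested hP (h.ssubset_of_ne hne.symm)).symm
  · exact h.mono sdiff_subset sdiff_subset

lemma avg_eq_setAverage (Q : Set (Fin n → ℝ)) (f : (Fin n → ℝ) → ℝ) :
    avg Q f = ⨍ x in Q, f x := by
  rw [setAverage_eq, avg, smul_eq_mul, Measure.real]

lemma sum_exp_avg_log_mul_volume_le {F : Finset (Set (Fin n → ℝ))}
    (hlam : IsLaminar (F : Set (Set (Fin n → ℝ)))) (hsparse : IsSparse (F : Set (Set (Fin n → ℝ))))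
    (hmeas : ∀ Q ∈ F, MeasurableSet Q) (hvol : ∀ Q ∈ F, volume Q ≠ ∞)
    (hvol₀ : ∀ Q ∈ F, volume Q ≠ 0) {w : (Fin n → ℝ) → ℝ} (hw_pos : ∀ x, 0 < w x)
    (hw_meas : AEMeasurable w) (hw : ∀ Q ∈ F, IntegrableOn w Q)
    (hlog : ∀ Q ∈ F, IntegrableOn (fun x => Real.log (w x)) Q) :
    ∑ Q ∈ F, ENNReal.ofReal (Real.exp (avg Q fun x => Real.log (w x))) * volume Q ≤
      8 * ∫⁻ x in ⋃₀ F, ENNReal.ofReal (w x) := by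
  set μ := volume.restrict (⋃₀ (F : Set (Set (Fin n → ℝ))))
  have hsub {Q : Set (Fin n → ℝ)} (hQ : Q ∈ F) : Q ⊆ ⋃₀ F := subset_sUnion_of_mem hQ
  have hμ {Q : Set (Fin n → ℝ)} (hQ : Q ∈ F) : μ Q = volume Q :=
    Measure.restrict_eq_self _ (hsub hQ)
  have hμE {Q : Set (Fin n → ℝ)} (hQ : Q ∈ F) : μ (Eset F Q) = volume (Eset F Q) :=
    Measure.restrict_eq_self _ (sdiff_subset.trans (hsub hQ))
  have hrestrict {Q : Set (Fin n → ℝ)} (hQ : Q ∈ F) : μ.restrict Q = volume.restrict Q :=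
    Measure.restrict_restrict_of_subset (hsub hQ)
  have hmajor := sum_exp_average_log_mul_measure_le (μ := μ) hlam hmeas
    (fun Q hQ => (hμ hQ).trans_ne (hvol Q hQ)) (fun Q hQ => (hμ hQ).trans_ne (hvol₀ Q hQ))
    hw_pos hw_meas.restrict
    (fun Q hQ => by rw [IntegrableOn, hrestrict hQ]; exact hw Q hQ)
    (fun Q hQ => by rw [IntegrableOn, hrestrict hQ]; exact hlog Q hQ)
    (E := Eset F) (fun _ _ => sdiff_subset) (fun _ => measurableSet_Eset hmeas)
    hlam.pairwiseDisjoint_Eset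
  calc ∑ Q ∈ F, ENNReal.ofReal (Real.exp (avg Q fun x => Real.log (w x))) * volume Q
      ≤ ∑ Q ∈ F, 2 * (ENNReal.ofReal (Real.exp (⨍ x in Q, Real.log (w x) ∂μ)) *
          μ (Eset F Q)) := by
        refine Finset.sum_le_sum fun Q hQ => ?_
        rw [hrestrict hQ, hμE hQ, avg_eq_setAverage, mul_left_comm]
        gcongr
        exact hsparse.volume_le_two_mul_volume_Eset hQ (hvol Q hQ)
    _ ≤ 2 * (4 * ∫⁻ x, ENNReal.ofReal (w x) ∂μ) := by
        rw [← Finset.mul_sum]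
        gcongr
    _ = 8 * ∫⁻ x in ⋃₀ F, ENNReal.ofReal (w x) := by
        rw [← mul_assoc, show (2 * 4 : ℝ≥0∞) = 8 by norm_num]

lemma tsum_exp_avg_log_mul_volume_le (hlam : IsLaminar 𝒮) (hsparse : IsSparse 𝒮)
    (hmeas : ∀ Q ∈ 𝒮, MeasurableSet Q) (hvol : ∀ Q ∈ 𝒮, volume Q ≠ ∞)
    (hvol₀ : ∀ Q ∈ 𝒮, volume Q ≠ 0) {w : (Fin n → ℝ) → ℝ} (hw_pos : ∀ x, 0 < w x)
    (hw_meas : AEMeasurable w) (hw : ∀ Q ∈ 𝒮, IntegrableOn w Q)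
    (hlog : ∀ Q ∈ 𝒮, IntegrableOn (fun x => Real.log (w x)) Q) :
    ∑' Q : 𝒮, ENNReal.ofReal (Real.exp (avg Q.1 fun x => Real.log (w x))) * volume Q.1 ≤
      8 * ∫⁻ x in ⋃₀ 𝒮, ENNReal.ofReal (w x) := by
  refine ENNReal.summable.tsum_le_of_sum_le fun s => ?_
  set F := s.map (Function.Embedding.subtype (· ∈ 𝒮))
  have hF : ∀ Q ∈ F, Q ∈ 𝒮 := fun Q hQ => Finset.property_of_mem_map_subtype s hQ
  calc _ = ∑ Q ∈ F, ENNReal.ofReal (Real.exp (avg Q fun x => Real.log (w x))) * volume Q :=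
        (Finset.sum_map s _ _).symm
    _ ≤ 8 * ∫⁻ x in ⋃₀ F, ENNReal.ofReal (w x) :=
        sum_exp_avg_log_mul_volume_le (hlam.mono hF) (hsparse.mono hF)
          (fun Q hQ => hmeas Q (hF Q hQ)) (fun Q hQ => hvol Q (hF Q hQ))
          (fun Q hQ => hvol₀ Q (hF Q hQ)) hw_pos hw_meas (fun Q hQ => hw Q (hF Q hQ))
          (fun Q hQ => hlog Q (hF Q hQ))
    _ ≤ 8 * ∫⁻ x in ⋃₀ 𝒮, ENNReal.ofReal (w x) := by
        gcongr
        exact hF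

end Sparse

section Cubes

variable {n : ℕ} {Q : Set (Fin n → ℝ)}

lemma IsCube.isCompact (hQ : IsCube Q) : IsCompact Q := by
  obtain ⟨a, l, -, rfl⟩ := hQ
  exact isCompact_Icc

lemma IsCube.volume_pos (hQ : IsCube Q) : 0 < volume Q := by
  obtain ⟨a, l, hl, rfl⟩ := hQ
  simpa [Real.volume_Icc_pi] using ENNReal.pow_pos (ENNReal.ofReal_pos.2 hl) n

lemma IsDyadicCubeOf.measurableSet {k : ℤ} (hQ : IsDyadicCubeOf k Q) : MeasurableSet Q := by
  obtain ⟨a, rfl⟩ := hQ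
  exact MeasurableSet.univ_pi fun i => measurableSet_Ico

lemma IsDyadicCubeOf.exists_isCube_ae_eq {k : ℤ} (hQ : IsDyadicCubeOf k Q) :
    ∃ Q', IsCube Q' ∧ Q =ᵐ[volume] Q' := by
  obtain ⟨a, rfl⟩ := hQ
  exact ⟨_, ⟨a, (2 : ℝ) ^ k, by positivity, rfl⟩, Measure.univ_pi_Ico_ae_eq_Icc⟩

lemma IsDyadicGrid.measurableSet {𝒟 : Set (Set (Fin n → ℝ))} (h𝒟 : IsDyadicGrid 𝒟) (hQ : Q ∈ 𝒟) :
    MeasurableSet Q :=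
  (h𝒟.1 Q hQ).elim fun _ hk => hk.measurableSet

lemma IsDyadicGrid.exists_isCube_ae_eq {𝒟 : Set (Set (Fin n → ℝ))} (h𝒟 : IsDyadicGrid 𝒟)
    (hQ : Q ∈ 𝒟) : ∃ Q', IsCube Q' ∧ Q =ᵐ[volume] Q' :=
  (h𝒟.1 Q hQ).elim fun _ hk => hk.exists_isCube_ae_eq

lemma IsDyadicGrid.isLaminar {𝒟 : Set (Set (Fin n → ℝ))} (h𝒟 : IsDyadicGrid 𝒟) : IsLaminar 𝒟 :=
  h𝒟.2.1

end Cubes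

section Weights

variable {n : ℕ} {p : ℝ} {w : (Fin n → ℝ) → ℝ} {Q : Set (Fin n → ℝ)}

/-- The mixed characteristic `[w]_{(A_p)^{1/p}(A_∞^exp)^{1/p'}}`, with the supremum over all cubes
taken in `ℝ≥0∞` so that it may be infinite. -/
def mixedCharacteristic {n : ℕ} (p : ℝ) (w : (Fin n → ℝ) → ℝ) : ℝ≥0∞ :=
  ⨆ Q : {Q : Set (Fin n → ℝ) // IsCube Q},
    ENNReal.ofReal (ApQ p w Q.1 ^ (1 / p) * AexpQ w Q.1 ^ ((p - 1) / p))

lemma avg_nonneg {f : (Fin n → ℝ) → ℝ} (hf : ∀ x, 0 ≤ f x) : 0 ≤ avg Q f :=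
  mul_nonneg (inv_nonneg.2 ENNReal.toReal_nonneg) (integral_nonneg hf)

lemma ApQ_nonneg (hw : ∀ x, 0 ≤ w x) : 0 ≤ ApQ p w Q :=
  mul_nonneg (avg_nonneg hw)
    (Real.rpow_nonneg (avg_nonneg fun x => Real.rpow_nonneg (hw x) _) _)

lemma AexpQ_nonneg (hw : ∀ x, 0 ≤ w x) : 0 ≤ AexpQ w Q :=
  mul_nonneg (avg_nonneg hw) (Real.exp_pos _).le

lemma ApQ_rpow_one_div_sub_one (hp : 1 < p) (hw : ∀ x, 0 ≤ w x) :
    ApQ p w Q ^ (1 / (p - 1)) =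
      avg Q w ^ (1 / (p - 1)) * avg Q fun x => w x ^ (-(1 / (p - 1))) := by
  have hσ : 0 ≤ avg Q fun x => w x ^ (-(1 / (p - 1))) :=
    avg_nonneg fun x => Real.rpow_nonneg (hw x) _
  rw [ApQ, Real.mul_rpow (avg_nonneg hw) (Real.rpow_nonneg hσ _), ← Real.rpow_mul hσ,
    mul_one_div_cancel (sub_pos.2 hp).ne', Real.rpow_one]

lemma AexpQ_mul_exp_avg_log :
    AexpQ w Q * Real.exp (avg Q fun x => Real.log (w x)) = avg Q w := by
  rw [AexpQ, mul_assoc, ← Real.exp_add, neg_add_cancel, Real.exp_zero, mul_one]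

lemma rpow_one_div_mul_rpow_rpow_conjExponent (hp : 1 < p) {a b : ℝ} (ha : 0 ≤ a) (hb : 0 ≤ b) :
    (a ^ (1 / p) * b ^ ((p - 1) / p)) ^ (p / (p - 1)) = a ^ (1 / (p - 1)) * b := by
  have hp0 : p ≠ 0 := by linarith
  have hp1 : p - 1 ≠ 0 := by linarith
  rw [Real.mul_rpow (Real.rpow_nonneg ha _) (Real.rpow_nonneg hb _), ← Real.rpow_mul ha,
    ← Real.rpow_mul hb, div_mul_div_cancel₀ hp0, div_mul_div_cancel₀ hp0, div_self hp1,
    Real.rpow_one]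

lemma avg_rpow_mul_setIntegral_eq (hp : 1 < p) (hw : ∀ x, 0 ≤ w x) (hQ : volume.real Q ≠ 0) :
    avg Q w ^ (p / (p - 1)) * ∫ x in Q, w x ^ (-(1 / (p - 1))) =
      (ApQ p w Q ^ (1 / p) * AexpQ w Q ^ ((p - 1) / p)) ^ (p / (p - 1)) *
        (Real.exp (avg Q fun x => Real.log (w x)) * volume.real Q) := by
  have hp1 : 0 < p - 1 := sub_pos.2 hp
  have hσ : ∫ x in Q, w x ^ (-(1 / (p - 1))) =
      (avg Q fun x => w x ^ (-(1 / (p - 1)))) * volume.real Q := by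
    rw [avg, ← measureReal_def, mul_right_comm, inv_mul_cancel₀ hQ, one_mul]
  have hexp : p / (p - 1) = 1 / (p - 1) + 1 := by field_simp; ring
  calc avg Q w ^ (p / (p - 1)) * ∫ x in Q, w x ^ (-(1 / (p - 1)))
      = ApQ p w Q ^ (1 / (p - 1)) * avg Q w * volume.real Q := by
        rw [hσ, ApQ_rpow_one_div_sub_one hp hw, hexp,
          Real.rpow_add_of_nonneg (avg_nonneg hw) (by positivity) zero_le_one, Real.rpow_one]
        ring
    _ = _ := by
        rw [rpow_one_div_mul_rpow_rpow_conjExponent hp (ApQ_nonneg hw) (AexpQ_nonneg hw),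
          ← AexpQ_mul_exp_avg_log (w := w) (Q := Q)]
        ring

lemma avg_congr_set {Q' : Set (Fin n → ℝ)} (h : Q =ᵐ[volume] Q') (f : (Fin n → ℝ) → ℝ) :
    avg Q f = avg Q' f := by
  rw [avg, avg, measure_congr h, setIntegral_congr_set h]

lemma ofReal_avg_rpow_mul_setIntegral_le (hp : 1 < p) (hw : ∀ x, 0 ≤ w x)
    {Q' : Set (Fin n → ℝ)} (hQ' : IsCube Q') (hae : Q =ᵐ[volume] Q') :
    ENNReal.ofReal (avg Q w ^ (p / (p - 1)) * ∫ x in Q, w x ^ (-(1 / (p - 1)))) ≤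
      mixedCharacteristic p w ^ (p / (p - 1)) *
        (ENNReal.ofReal (Real.exp (avg Q fun x => Real.log (w x))) * volume Q) := by
  simp only [avg_congr_set hae, setIntegral_congr_set hae, measure_congr hae]
  have hvol : volume Q' ≠ ∞ := hQ'.isCompact.measure_lt_top.ne
  have hp' : 0 ≤ p / (p - 1) := div_nonneg (by linarith) (sub_pos.2 hp).le
  have hA : 0 ≤ ApQ p w Q' ^ (1 / p) * AexpQ w Q' ^ ((p - 1) / p) :=
    mul_nonneg (Real.rpow_nonneg (ApQ_nonneg hw) _) (Real.rpow_nonneg (AexpQ_nonneg hw) _)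
  rw [avg_rpow_mul_setIntegral_eq hp hw (ENNReal.toReal_ne_zero.2 ⟨hQ'.volume_pos.ne', hvol⟩),
    ENNReal.ofReal_mul (Real.rpow_nonneg hA _), ← ENNReal.ofReal_rpow_of_nonneg hA hp',
    ENNReal.ofReal_mul (Real.exp_pos _).le, ofReal_measureReal hvol]
  gcongr
  exact le_iSup (fun Q : {Q : Set (Fin n → ℝ) // IsCube Q} =>
    ENNReal.ofReal (ApQ p w Q.1 ^ (1 / p) * AexpQ w Q.1 ^ ((p - 1) / p))) ⟨Q', hQ'⟩

end Weights

theorem stmt13_general {p : ℝ} (hp : 1 < p) {n : ℕ} {𝒮 : Set (Set (Fin n → ℝ))}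
    (hlam : IsLaminar 𝒮) (hsparse : IsSparse 𝒮) (hmeas : ∀ Q ∈ 𝒮, MeasurableSet Q)
    (hcube : ∀ Q ∈ 𝒮, ∃ Q', IsCube Q' ∧ Q =ᵐ[volume] Q') {w : (Fin n → ℝ) → ℝ}
    (hw_pos : ∀ x, 0 < w x) (hw : LocallyIntegrable w)
    (hσ : LocallyIntegrable fun x => w x ^ (-(1 / (p - 1)))) :
    ∑' Q : 𝒮, ENNReal.ofReal
        (avg Q.1 w ^ (p / (p - 1)) * ∫ x in Q.1, w x ^ (-(1 / (p - 1)))) ≤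
      8 * mixedCharacteristic p w ^ (p / (p - 1)) * ∫⁻ x in ⋃₀ 𝒮, ENNReal.ofReal (w x) := by
  have hvol : ∀ Q ∈ 𝒮, volume Q ≠ 0 ∧ volume Q ≠ ∞ := fun Q hQ => by
    obtain ⟨Q', hQ', hae⟩ := hcube Q hQ
    rw [measure_congr hae]
    exact ⟨hQ'.volume_pos.ne', hQ'.isCompact.measure_lt_top.ne⟩
  have hint {f : (Fin n → ℝ) → ℝ} (hf : LocallyIntegrable f) : ∀ Q ∈ 𝒮, IntegrableOn f Q :=
    fun Q hQ => by
      obtain ⟨Q', hQ', hae⟩ := hcube Q hQ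
      exact (hf.integrableOn_isCompact hQ'.isCompact).congr_set_ae hae
  calc _ ≤ ∑' Q : 𝒮, mixedCharacteristic p w ^ (p / (p - 1)) *
          (ENNReal.ofReal (Real.exp (avg Q.1 fun x => Real.log (w x))) * volume Q.1) :=
        ENNReal.tsum_le_tsum fun Q =>
          have ⟨_, hQ', hae⟩ := hcube Q Q.2
          ofReal_avg_rpow_mul_setIntegral_le hp (fun x => (hw_pos x).le) hQ' hae
    _ ≤ mixedCharacteristic p w ^ (p / (p - 1)) *
          (8 * ∫⁻ x in ⋃₀ 𝒮, ENNReal.ofReal (w x)) := by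
        rw [ENNReal.tsum_mul_left]
        gcongr
        exact tsum_exp_avg_log_mul_volume_le hlam hsparse hmeas (fun Q hQ => (hvol Q hQ).2)
          (fun Q hQ => (hvol Q hQ).1) hw_pos hw.aestronglyMeasurable.aemeasurable (hint hw)
          fun Q hQ => integrable_log_of_rpow_neg (one_div_pos.2 (sub_pos.2 hp)) hw_pos
            (hint hw Q hQ) (hint hσ Q hQ)
    _ = _ := by rw [← mul_assoc, mul_comm (_ ^ _) 8]

/-- For a sparse family `𝒮` of dyadic cubes contained in a cube `R` and
`σ = w^{1-p'}`:
`∑_{Q ∈ 𝒮} (⨍_Q w)^{p'} σ(Q) ≲ [w]_{(A_p)^{1/p}(A_∞^exp)^{1/p'}}^{p'} w(R)`,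
with implicit constant depending only on `p` and the dimension. -/
theorem stmt13 (p : ℝ) (hp : 1 < p) (n : ℕ) :
    ∃ C > (0 : ℝ), ∀ (𝒟 𝒮 : Set (Set (Fin n → ℝ))),
      IsDyadicGrid 𝒟 → 𝒮 ⊆ 𝒟 → IsSparse 𝒮 →
      ∀ (w σ : (Fin n → ℝ) → ℝ), (∀ x, 0 < w x) →
      σ = (fun x => w x ^ (-(1 / (p - 1)))) →
      LocallyIntegrable w volume → LocallyIntegrable σ volume →
      LocallyIntegrable (fun x => Real.log (w x)) volume →
      ∀ R : Set (Fin n → ℝ), IsCube R → (∀ Q ∈ 𝒮, Q ⊆ R) →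
      ∑' Q : 𝒮, ENNReal.ofReal (avg Q.1 w ^ (p / (p - 1)) * ∫ x in Q.1, σ x) ≤
        ENNReal.ofReal C *
          (⨆ Q : {Q : Set (Fin n → ℝ) // IsCube Q},
            ENNReal.ofReal (ApQ p w Q.1 ^ (1 / p) * AexpQ w Q.1 ^ ((p - 1) / p)))
            ^ (p / (p - 1)) *
          ENNReal.ofReal (∫ x in R, w x) := by
  refine ⟨8, by norm_num, fun 𝒟 𝒮 h𝒟 h𝒮 hsparse w σ hw_pos hσ hw hσ_int _ R hR hsub => ?_⟩
  subst hσ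
  rw [ofReal_integral_eq_lintegral_ofReal (hw.integrableOn_isCompact hR.isCompact)
    (ae_of_all _ fun x => (hw_pos x).le), ENNReal.ofReal_ofNat]
  exact (stmt13_general hp (h𝒟.isLaminar.mono h𝒮) hsparse (fun _ hQ => h𝒟.measurableSet (h𝒮 hQ))
    (fun _ hQ => h𝒟.exists_isCube_ae_eq (h𝒮 hQ)) hw_pos hw hσ_int).trans
    (mul_le_mul_right (lintegral_mono_set (sUnion_subset hsub)) _)
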